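/- Let F : [0,∞)² → [0,∞) satisfy: F(u,0) = F(0,v) = 0 for all u, v ≥ 0; F(u₂,v₂) − F(u₁,v₂) − F(u₂,v₁) + F(u₁,v₁) ≥ 0 whenever u₁ ≤ u₂ and v₁ ≤ v₂; and F(u,v) → v as u → ∞, for every v ≥ 0. Assume that for all u, v ≥ 0 the partial derivative D(u,v) = ∂F(u,v)/∂v exists. Then for Lebesgue-almost every v > 0, lim_{u→∞} D(u,v) = 1. In particular, for every v ≥ 0 at which this limit holds, u ↦ D(u,v) is a distribution function on [0,∞): it is nondecreasing, equals 0 at u = 0, and tends to 1 as u → ∞. -/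

import Mathlib

open Real Filter MeasureTheory

open Set Topology

/-!
Each difference `F u₂ - F u₁` with `u₁ ≤ u₂` is nondecreasing in `v`, and so is the distance
`G - F u` to the margin `G = lim F u`. Hence `∂(G - F u)/∂v` is nonnegative and nonincreasing in
`u`, while its integral over `[a, b]` is at most the increment of `G - F u`, which tends to `0`.
By monotone convergence along integers `∂(G - F n)/∂v → 0` almost everywhere, and monotonicity
in `u` passes from integers to real `u`.
-/

/-- The rectangle inequality of copula theory on `S × T`. The first variable ranges over an
arbitrary preorder so that sequences of functions are covered as well as functions on `ℝ²`. -/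
def TwoIncreasingOn {ι α : Type*} [Preorder ι] [Preorder α] (F : ι → α → ℝ)
    (S : Set ι) (T : Set α) : Prop :=
  ∀ ⦃u₁⦄, u₁ ∈ S → ∀ ⦃u₂⦄, u₂ ∈ S → u₁ ≤ u₂ → ∀ ⦃v₁⦄, v₁ ∈ T → ∀ ⦃v₂⦄, v₂ ∈ T → v₁ ≤ v₂ →
    0 ≤ F u₂ v₂ - F u₁ v₂ - F u₂ v₁ + F u₁ v₁

namespace TwoIncreasingOn

section Preorder

variable {ι α : Type*} [Preorder ι] [Preorder α] {F : ι → α → ℝ} {S : Set ι} {T : Set α}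

theorem comp_monotoneOn {κ : Type*} [Preorder κ] {φ : κ → ι} {R : Set κ}
    (hF : TwoIncreasingOn F S T) (hφ : MonotoneOn φ R) (hφS : MapsTo φ R S) :
    TwoIncreasingOn (fun k => F (φ k)) R T :=
  fun _ h₁ _ h₂ h => hF (hφS h₁) (hφS h₂) (hφ h₁ h₂ h)

theorem monotoneOn_sub (hF : TwoIncreasingOn F S T) {u₁ u₂ : ι} (h₁ : u₁ ∈ S) (h₂ : u₂ ∈ S)
    (h : u₁ ≤ u₂) : MonotoneOn (F u₂ - F u₁) T := by
  intro v₁ hv₁ v₂ hv₂ hv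
  have := hF h₁ h₂ h hv₁ hv₂ hv
  simp only [Pi.sub_apply]
  linarith

theorem monotoneOn_margin_sub [IsDirectedOrder ι] {G : α → ℝ} (hF : TwoIncreasingOn F S T)
    (hS : S ∈ atTop) (hG : ∀ v ∈ T, Tendsto (fun u => F u v) atTop (𝓝 (G v)))
    {u : ι} (hu : u ∈ S) : MonotoneOn (G - F u) T := by
  have : Nonempty ι := ⟨u⟩
  intro v₁ hv₁ v₂ hv₂ hv
  refine le_of_tendsto_of_tendsto ((hG v₁ hv₁).sub_const (F u v₁))
    ((hG v₂ hv₂).sub_const (F u v₂)) ?_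
  filter_upwards [hS, eventually_ge_atTop u] with w hw huw
  exact hF.monotoneOn_sub hu hw huw hv₁ hv₂ hv

end Preorder

theorem monotoneOn_of_hasDerivWithinAt {ι : Type*} [Preorder ι] {F : ι → ℝ → ℝ} {S : Set ι}
    {T : Set ℝ} {D : ι → ℝ} {v : ℝ} (hF : TwoIncreasingOn F S T) (hv : AccPt v (𝓟 T))
    (hD : ∀ u ∈ S, HasDerivWithinAt (F u) (D u) T v) : MonotoneOn D S :=
  fun u₁ h₁ u₂ h₂ h => sub_nonneg.1 <|
    ((hD u₂ h₂).sub (hD u₁ h₁)).nonneg_of_monotoneOn hv (hF.monotoneOn_sub h₁ h₂ h)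

end TwoIncreasingOn

theorem ae_differentiableAt_interior_of_monotoneOn {f : ℝ → ℝ} {s : Set ℝ}
    (hf : MonotoneOn f s) : ∀ᵐ x ∂volume.restrict (interior s), DifferentiableAt ℝ f x := by
  rw [ae_restrict_iff' isOpen_interior.measurableSet]
  filter_upwards [hf.ae_differentiableWithinAt_of_mem] with x hx hxs
  exact (hx (interior_subset hxs)).differentiableAt (mem_interior_iff_mem_nhds.1 hxs)

theorem tendsto_integral_deriv_zero_of_monotoneOn {h : ℕ → ℝ → ℝ} {a b : ℝ} (hab : a ≤ b)
    (hmono : ∀ n, MonotoneOn (h n) (Icc a b))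
    (hlim : Tendsto (fun n => h n b - h n a) atTop (𝓝 0)) :
    Tendsto (fun n => ∫ v in a..b, deriv (h n) v) atTop (𝓝 0) := by
  have hmem (n : ℕ) : ∫ v in a..b, deriv (h n) v ∈ Icc 0 (h n b - h n a) := by
    have hinc : 0 ≤ h n b - h n a :=
      sub_nonneg.2 (hmono n (left_mem_Icc.2 hab) (right_mem_Icc.2 hab) hab)
    rw [← uIcc_of_le hinc]
    exact MonotoneOn.intervalIntegral_deriv_mem_uIcc ((uIcc_of_le hab).symm ▸ hmono n)
  exact squeeze_zero (fun n => (hmem n).1) (fun n => (hmem n).2) hlim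

theorem ae_tendsto_deriv_zero_of_monotoneOn {h : ℕ → ℝ → ℝ} {a b : ℝ} (hab : a ≤ b)
    (hmono : ∀ n, MonotoneOn (h n) (Icc a b))
    (hanti : ∀ ⦃m n⦄, m ≤ n → MonotoneOn (h m - h n) (Icc a b))
    (hlim : Tendsto (fun n => h n b - h n a) atTop (𝓝 0)) :
    ∀ᵐ v ∂volume.restrict (Ioo a b), Tendsto (fun n => deriv (h n) v) atTop (𝓝 0) := by
  have hdiff : ∀ᵐ v ∂volume.restrict (Ioo a b), ∀ n, DifferentiableAt ℝ (h n) v :=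
    ae_all_iff.2 fun n => interior_Icc (a := a) (b := b) ▸
      ae_differentiableAt_interior_of_monotoneOn (hmono n)
  refine tendsto_of_integral_tendsto_of_antitone (F := fun _ => 0) (fun n => ?_)
    (integrable_zero _ _ _) ?_ ?_ ?_
  · have hint : IntervalIntegrable (deriv (h n)) volume a b :=
      MonotoneOn.intervalIntegrable_deriv ((uIcc_of_le hab).symm ▸ hmono n)
    exact (intervalIntegrable_iff_integrableOn_Ioo_of_le hab).1 hint
  · simpa only [integral_zero, ← integral_Ioc_eq_integral_Ioo,
      ← intervalIntegral.integral_of_le hab]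
      using tendsto_integral_deriv_zero_of_monotoneOn hab hmono hlim
  · filter_upwards [hdiff, ae_restrict_mem measurableSet_Ioo] with v hd hv m n hmn
    have hacc : AccPt v (𝓟 (Ioo a b)) := (uniqueDiffOn_Ioo a b v hv).accPt
    exact sub_nonneg.1 <|
      ((hd m).hasDerivAt.sub (hd n).hasDerivAt).hasDerivWithinAt.nonneg_of_monotoneOn hacc
        ((hanti hmn).mono Ioo_subset_Icc_self)
  · filter_upwards [hdiff, ae_restrict_mem measurableSet_Ioo] with v hd hv n
    have hacc : AccPt v (𝓟 (Ioo a b)) := (uniqueDiffOn_Ioo a b v hv).accPt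
    exact (hd n).hasDerivAt.hasDerivWithinAt.nonneg_of_monotoneOn hacc
      ((hmono n).mono Ioo_subset_Icc_self)

theorem ae_restrict_Ioi_of_forall_Ioo {μ : Measure ℝ} {p : ℝ → Prop} {a : ℝ}
    (h : ∀ b, a ≤ b → ∀ᵐ v ∂μ.restrict (Ioo a b), p v) : ∀ᵐ v ∂μ.restrict (Ioi a), p v := by
  have hunion : ⋃ n : ℕ, Ioo a (a + n) = Ioi a := by
    ext v
    simp only [mem_iUnion, mem_Ioo, mem_Ioi, exists_and_left, and_iff_left_iff_imp]
    intro _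
    obtain ⟨n, hn⟩ := exists_nat_gt (v - a)
    exact ⟨n, by linarith⟩
  rw [← hunion, ae_restrict_iUnion_iff]
  exact fun n => h _ (le_add_of_nonneg_right n.cast_nonneg)

theorem tendsto_atTop_iff_natCast_of_monotoneOn_Ici {f : ℝ → ℝ} {l : ℝ}
    (hf : MonotoneOn f (Ici 0)) :
    Tendsto f atTop (𝓝 l) ↔ Tendsto (fun n : ℕ => f n) atTop (𝓝 l) := by
  have hmono : Monotone fun u => f (max 0 u) := fun _ _ h =>
    hf (mem_Ici.2 (le_max_left 0 _)) (mem_Ici.2 (le_max_left 0 _)) (max_le_max_left 0 h)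
  have heq : (fun u => f (max 0 u)) =ᶠ[atTop] f := by
    filter_upwards [eventually_ge_atTop 0] with u hu
    rw [max_eq_right hu]
  rw [← tendsto_congr' heq,
    tendsto_iff_tendsto_subseq_of_monotone hmono tendsto_natCast_atTop_atTop]
  simp only [Function.comp_def, max_eq_right (Nat.cast_nonneg _)]

namespace TwoIncreasingOn

theorem ae_tendsto_deriv {f : ℕ → ℝ → ℝ} {g : ℝ → ℝ} {a : ℝ}
    (hf : TwoIncreasingOn f univ (Ici a))
    (hg : ∀ v ∈ Ici a, Tendsto (fun n => f n v) atTop (𝓝 (g v))) :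
    ∀ᵐ v ∂volume.restrict (Ioi a), (∀ n, DifferentiableAt ℝ (f n) v) →
      DifferentiableAt ℝ g v ∧ Tendsto (fun n => deriv (f n) v) atTop (𝓝 (deriv g v)) := by
  have hmono (n : ℕ) : MonotoneOn (g - f n) (Ici a) :=
    hf.monotoneOn_margin_sub univ_mem hg (mem_univ n)
  have hanti ⦃m n : ℕ⦄ (hmn : m ≤ n) : MonotoneOn ((g - f m) - (g - f n)) (Ici a) := by
    rw [sub_sub_sub_cancel_left]
    exact hf.monotoneOn_sub (mem_univ m) (mem_univ n) hmn
  have hpt (v : ℝ) (hv : v ∈ Ici a) : Tendsto (fun n => (g - f n) v) atTop (𝓝 0) := by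
    simpa only [Pi.sub_apply, sub_self] using (hg v hv).const_sub (g v)
  have hlim : ∀ᵐ v ∂volume.restrict (Ioi a),
      Tendsto (fun n => deriv (g - f n) v) atTop (𝓝 0) := by
    refine ae_restrict_Ioi_of_forall_Ioo fun b hab => ?_
    refine ae_tendsto_deriv_zero_of_monotoneOn hab
      (fun n => (hmono n).mono Icc_subset_Ici_self)
      (fun m n hmn => (hanti hmn).mono Icc_subset_Ici_self) ?_
    simpa only [sub_zero] using (hpt b hab).sub (hpt a self_mem_Ici)
  have hdiff : ∀ᵐ v ∂volume.restrict (Ioi a), DifferentiableAt ℝ (g - f 0) v :=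
    interior_Ici (a := a) ▸ ae_differentiableAt_interior_of_monotoneOn (hmono 0)
  filter_upwards [hlim, hdiff] with v hv hd hfd
  have hgd : DifferentiableAt ℝ g v := by
    simpa only [sub_add_cancel] using hd.add (hfd 0)
  refine ⟨hgd, ?_⟩
  simpa only [deriv_sub hgd (hfd _), sub_sub_cancel, sub_zero] using hv.const_sub (deriv g v)

theorem ae_tendsto_of_hasDerivAt {F D : ℝ → ℝ → ℝ} {G : ℝ → ℝ} {E : Set ℝ} {a : ℝ}
    (hF : TwoIncreasingOn F (Ici 0) (Ici a))
    (hG : ∀ v ∈ Ici a, Tendsto (fun u => F u v) atTop (𝓝 (G v)))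
    (hD : ∀ u ∈ Ici 0, ∀ v ∈ E, HasDerivWithinAt (F u) (D u v) (Ici a) v) :
    ∀ᵐ v ∂volume.restrict (Ioi a), v ∈ E →
      DifferentiableAt ℝ G v ∧ Tendsto (fun u => D u v) atTop (𝓝 (deriv G v)) := by
  have hseq : TwoIncreasingOn (fun n : ℕ => F n) univ (Ici a) :=
    hF.comp_monotoneOn (Nat.mono_cast.monotoneOn univ) (fun n _ => mem_Ici.2 n.cast_nonneg)
  have hlim := hseq.ae_tendsto_deriv fun v hv => (hG v hv).comp tendsto_natCast_atTop_atTop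
  filter_upwards [hlim, ae_restrict_mem measurableSet_Ioi] with v hv hav hvE
  have hDn (n : ℕ) : HasDerivAt (F n) (D n v) v :=
    (hD n (mem_Ici.2 n.cast_nonneg) v hvE).hasDerivAt (Ici_mem_nhds hav)
  have hmono : MonotoneOn (fun u => D u v) (Ici 0) :=
    hF.monotoneOn_of_hasDerivWithinAt (uniqueDiffOn_Ici a v (Ioi_subset_Ici_self hav)).accPt
      fun u hu => hD u hu v hvE
  rw [tendsto_atTop_iff_natCast_of_monotoneOn_Ici hmono]
  simpa only [(hDn _).deriv] using hv fun n => (hDn n).differentiableAt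

end TwoIncreasingOn

theorem levy_copula_partial_derivative_distribution_general
    {F D : ℝ → ℝ → ℝ} {G : ℝ → ℝ} {E : Set ℝ} (hE : E ⊆ Ici 0)
    (hground : ∀ v ∈ Ici 0, F 0 v = 0) (hF : TwoIncreasingOn F (Ici 0) (Ici 0))
    (hG : ∀ v ∈ Ici 0, Tendsto (fun u => F u v) atTop (𝓝 (G v)))
    (hD : ∀ u ∈ Ici 0, ∀ v ∈ E, HasDerivWithinAt (F u) (D u v) (Ici 0) v) :
    (∀ᵐ v ∂volume.restrict (Ioi 0), v ∈ E →
      DifferentiableAt ℝ G v ∧ Tendsto (fun u => D u v) atTop (𝓝 (deriv G v))) ∧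
    ∀ v ∈ E, MonotoneOn (fun u => D u v) (Ici 0) ∧ D 0 v = 0 := by
  refine ⟨hF.ae_tendsto_of_hasDerivAt hG hD, fun v hv => ⟨?_, ?_⟩⟩
  · exact hF.monotoneOn_of_hasDerivWithinAt (uniqueDiffOn_Ici 0 v (hE hv)).accPt
      fun u hu => hD u hu v hv
  · have hconst : HasDerivWithinAt (F 0) 0 (Ici 0) v :=
      (hasDerivWithinAt_const v (Ici 0) 0).congr hground (hground v (hE hv))
    exact (uniqueDiffOn_Ici 0 v (hE hv)).eq_deriv _ (hD 0 self_mem_Ici v hv) hconst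

/-- for a grounded, 2-increasing F on [0,∞)² with uniform margin
F(u,v) → v as u → ∞ whose partial derivative D = ∂F/∂v exists everywhere, for
Lebesgue-a.e. v > 0 one has D(u,v) → 1 as u → ∞; and for every v ≥ 0 at which this
limit holds, u ↦ D(u,v) is a distribution function on [0,∞). -/
theorem levy_copula_partial_derivative_distribution
    (F D : ℝ → ℝ → ℝ)
    (hground : ∀ u : ℝ, 0 ≤ u → F u 0 = 0 ∧ F 0 u = 0)
    (hincr : ∀ u₁ u₂ v₁ v₂ : ℝ, 0 ≤ u₁ → u₁ ≤ u₂ → 0 ≤ v₁ → v₁ ≤ v₂ →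
      0 ≤ F u₂ v₂ - F u₁ v₂ - F u₂ v₁ + F u₁ v₁)
    (hmargin : ∀ v : ℝ, 0 ≤ v → Tendsto (fun u => F u v) atTop (nhds v))
    (hD : ∀ u v : ℝ, 0 ≤ u → 0 ≤ v →
      HasDerivWithinAt (fun t => F u t) (D u v) (Set.Ici 0) v) :
    (∀ᵐ v ∂(volume.restrict (Set.Ioi (0 : ℝ))),
      Tendsto (fun u => D u v) atTop (nhds 1)) ∧
    (∀ v : ℝ, 0 ≤ v → Tendsto (fun u => D u v) atTop (nhds 1) →
      MonotoneOn (fun u => D u v) (Set.Ici 0) ∧ D 0 v = 0 ∧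
        Tendsto (fun u => D u v) atTop (nhds 1)) := by
  obtain ⟨hlim, hdist⟩ := levy_copula_partial_derivative_distribution_general
    (Subset.refl (Ici 0)) (fun v hv => (hground v hv).2)
    (fun u₁ hu₁ u₂ _ hu v₁ hv₁ v₂ _ hv => hincr u₁ u₂ v₁ v₂ hu₁ hu hv₁ hv)
    hmargin (fun u hu v hv => hD u v hu hv)
  refine ⟨?_, fun v hv h => ⟨(hdist v hv).1, (hdist v hv).2, h⟩⟩
  filter_upwards [hlim, ae_restrict_mem measurableSet_Ioi] with v hv hpos
  simpa only [deriv_id''] using (hv (Ioi_subset_Ici_self hpos)).2
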